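/- Let f : S → ℂ be a non-zero solution of the integral Van Vleck equation. Then f(τ(x)) = −f(x) for all x ∈ S. -/

import Mathlib

/-!
Replacing `y` by `τ y` interchanges the two terms on the left-hand side of the Van Vleck equation.
The product `f x * f y` therefore changes sign, and `f x` can be cancelled at a point where it does
not vanish.
-/

theorem apply_involutive_eq_neg_of_sub_eq_mul {Y R : Type*} [NonUnitalNonAssocRing R]
    [NoZeroDivisors R] {σ : Y → Y} (hσ : Function.Involutive σ) {k h : Y → R} {a : R} (ha : a ≠ 0)
    (hk : ∀ y, k (σ y) - k y = a * h y) (y : Y) : h (σ y) = -h y := by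
  have hmul : a * (h (σ y) + h y) = 0 :=
    calc
      a * (h (σ y) + h y) = (k (σ (σ y)) - k (σ y)) + (k (σ y) - k y) := by rw [mul_add, hk, hk]
      _ = 0 := by rw [hσ y, sub_add_sub_cancel, sub_self]
  exact eq_neg_of_add_eq_zero_left ((mul_eq_zero.mp hmul).resolve_left ha)

/-- `Λ` stands for `h ↦ ∫ h dμ`. It is a plain function and not a linear map because the Bochner
integral fails to be additive on non-integrable functions. -/
theorem stmt_0_general {S R : Type*} [Mul S] [Ring R] [NoZeroDivisors R] [NeZero (2 : R)]
    {τ : S → S} (hτ : Function.Involutive τ) (Λ : (S → R) → R) {f : S → R} (hf : f ≠ 0)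
    (hVV : ∀ x y : S,
      Λ (fun t ↦ f (x * τ y * t)) - Λ (fun t ↦ f (x * y * t)) = 2 * f x * f y) (y : S) :
    f (τ y) = -f y := by
  obtain ⟨x, hx⟩ : ∃ x, f x ≠ 0 := Function.ne_iff.mp hf
  exact apply_involutive_eq_neg_of_sub_eq_mul (k := fun y ↦ Λ fun t ↦ f (x * y * t)) hτ
    (mul_ne_zero two_ne_zero hx) (hVV x) y

theorem stmt_0 {S ι : Type*} [Semigroup S] (τ : S → S)
    (hτmul : ∀ x y : S, τ (x * y) = τ y * τ x)
    (hτinv : ∀ x : S, τ (τ x) = x)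
    (I : Finset ι) (c : ι → ℂ) (z : ι → S)
    (hz : ∀ i ∈ I, ∀ s : S, z i * s = s * z i)
    (f : S → ℂ) (hf : f ≠ 0)
(hVV : ∀ x y : S,
      (∑ i ∈ I, c i * f (x * τ y * z i)) - (∑ i ∈ I, c i * f (x * y * z i))
        = 2 * f x * f y) :
    ∀ x : S, f (τ x) = -f x :=
  stmt_0_general hτinv (fun h ↦ ∑ i ∈ I, c i * h (z i)) hf hVV
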